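/- Take n = 1 and assume k ≤ 2j − 2, and let R ⊆ A be the ℂ-span of the monomials z^l·u with k − j + 1 ≤ l ≤ j − 1, so dim_ℂ R = 2j − k − 1. Then the relation E_p ≅ E_{p′} is an equivalence relation on R ∖ {0}, and the map sending p to the line ℂ·p induces a well-defined bijection from the set of equivalence classes of R ∖ {0} under this relation onto the projectivization ℙ(R) of R, which is a projective space of dimension 2j − k − 2. (This is the identification of the coarse moduli space of nontrivial extension bundles of splitting type j on Z_k^{(1)} with ℙ^{2j−k−2}.) -/

import Mathlib

set_option synthInstance.maxHeartbeats 1000000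
set_option maxHeartbeats 1000000

noncomputable section

/-- The ring of Laurent polynomials `ℂ[z,z⁻¹]`. -/
abbrev Lz : Type := LaurentPolynomial ℂ

/-- The ring `P = ℂ[z,z⁻¹][[u]]` of formal power series in `u` with Laurent
polynomial coefficients. -/
abbrev Pz : Type := PowerSeries Lz

/-- The monomial `z^l u^i` as an element of `P`. -/
def mon (l : ℤ) (i : ℕ) : Pz := PowerSeries.monomial i (LaurentPolynomial.T l)

/-- The ideal `(u^{n+1})` of `P`. -/
def In (n : ℕ) : Ideal Pz := Ideal.span {(PowerSeries.X : Pz) ^ (n + 1)}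

/-- The ring `A = ℂ[z,z⁻¹][u]/(u^{n+1})`, the coordinate ring of the overlap of the two
standard charts of the `n`-th infinitesimal neighborhood `Z_k^{(n)}`. -/
abbrev Aq (n : ℕ) : Type := Pz ⧸ In n

/-- The quotient map `P → A`. -/
def toA (n : ℕ) : Pz →+* Aq n := Ideal.Quotient.mk (In n)

/-- The monomial `z^l u^i` as an element of `A`. -/
def monA (n : ℕ) (l : ℤ) (i : ℕ) : Aq n := toA n (mon l i)

/-- `O_U ⊆ A`: the `ℂ`-span of the monomials `z^l u^i` with `l ≥ 0`, `0 ≤ i ≤ n`. -/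
def OU (n : ℕ) : Submodule ℂ (Aq n) :=
  Submodule.span ℂ {x | ∃ l : ℤ, ∃ i : ℕ, 0 ≤ l ∧ i ≤ n ∧ x = monA n l i}

/-- `O_V ⊆ A`: the `ℂ`-span of the monomials `z^l u^i` with `l ≤ k·i`, `0 ≤ i ≤ n`. -/
def OV (k n : ℕ) : Submodule ℂ (Aq n) :=
  Submodule.span ℂ {x | ∃ l : ℤ, ∃ i : ℕ, l ≤ k * i ∧ i ≤ n ∧ x = monA n l i}

/-- The submodule `a·S` obtained from a submodule `S` by multiplying by a fixed element `a`. -/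
def msmul {n : ℕ} (a : Aq n) (S : Submodule ℂ (Aq n)) : Submodule ℂ (Aq n) :=
  Submodule.map (LinearMap.mulLeft ℂ a) S

/-- `R ⊆ A`: the `ℂ`-span of the monomials `z^l u^i` with `1 ≤ i ≤ n` and
`k·i − j + 1 ≤ l ≤ j − 1` (the space of normal forms of extension classes). -/
def Rmod (k n : ℕ) (j : ℤ) : Submodule ℂ (Aq n) :=
  Submodule.span ℂ
    {x | ∃ l : ℤ, ∃ i : ℕ, 1 ≤ i ∧ i ≤ n ∧ (k : ℤ) * i - j + 1 ≤ l ∧ l ≤ j - 1 ∧ x = monA n l i}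

/-- The transition matrix `M_p = ((z^j, p),(0, z^{−j}))` of the bundle `E_p`. -/
def Mmat (n : ℕ) (j : ℤ) (p : Aq n) : Matrix (Fin 2) (Fin 2) (Aq n) :=
  !![monA n j 0, p; 0, monA n (-j) 0]

/-- `E_p ≅ E_{p′}`: there are matrices `A₁` with entries in `O_U` and `B₁` with entries
in `O_V`, with `det A₁` a unit of `O_U` and `det B₁` a unit of `O_V`, with
`B₁ · M_p = M_{p′} · A₁`. -/
def BundleIso (k n : ℕ) (j : ℤ) (p p' : Aq n) : Prop :=
  ∃ A₁ B₁ : Matrix (Fin 2) (Fin 2) (Aq n),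
    (∀ a b : Fin 2, A₁ a b ∈ OU n) ∧ (∀ a b : Fin 2, B₁ a b ∈ OV k n) ∧
    (∃ w ∈ OU n, A₁.det * w = 1) ∧ (∃ w ∈ OV k n, B₁.det * w = 1) ∧
    B₁ * Mmat n j p = Mmat n j p' * A₁

/-- The isomorphism relation `E_p ≅ E_{p′}` restricted to the nonzero elements of `R`. -/
def relIso (k : ℕ) (j : ℤ) (p q : {x : Aq 1 // x ∈ Rmod k 1 j ∧ x ≠ 0}) : Prop :=
  BundleIso k 1 j p.1 q.1

/-!
Every `p ∈ R` vanishes along the zero section `ℓ`, so an isomorphism `E_p ≅ E_q` restricts on `ℓ` to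
an automorphism of `𝒪(-j) ⊕ 𝒪(j)`, which is triangular with constant diagonal entries `a, d ∈ ℂˣ`.
Writing `p = p₁u` and `q = q₁u`, the `u`-coefficient of the upper right entry of
`B₁ · M_p = M_q · A₁` then reads `β z^{-j} + a p₁ = z^j α + d q₁` with `α ∈ ℂ[z]` and
`β ∈ z^k ℂ[z⁻¹]`. The exponents of `p₁` and `q₁` lie strictly between `k - j` and `j`, where neither
`β z^{-j}` nor `z^j α` contributes, so `a p₁ = d q₁`. Conversely `diag(c, 1)` is an isomorphism
`E_p ≅ E_{cp}` for every `c ∈ ℂˣ`.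
-/

open LaurentPolynomial AddMonoidAlgebra

section LaurentPolynomial

variable {R : Type*} [Semiring R]

lemma coeff_T_mul (l t : ℤ) (f : R[T;T⁻¹]) : (T l * f).coeff t = f.coeff (t - l) := by
  rw [T, coeff_single_mul_apply, one_mul, neg_add_eq_sub]

lemma coeff_mul_T (l t : ℤ) (f : R[T;T⁻¹]) : (f * T l).coeff t = f.coeff (t - l) := by
  rw [← T_mul, coeff_T_mul]

lemma eq_of_mul_T_eq_T_mul {l : ℤ} {f g : R[T;T⁻¹]} (h : g * T l = T l * f) : g = f :=
  (isUnit_T l).mul_left_cancel (by rw [T_mul, h])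

lemma T_mem_supported {l : ℤ} {s : Set ℤ} (hl : l ∈ s) : (T l : R[T;T⁻¹]) ∈ supported R R s := by
  rw [mem_supported']
  intro t ht
  rw [T_apply, if_neg (ne_of_mem_of_not_mem hl ht)]

-- `H⁰(ℙ¹, 𝒪) = R`.
lemma exists_eq_C_of_mem_supported {f : R[T;T⁻¹]} (hf₀ : f ∈ supported R R (Set.Ici 0))
    (hf₁ : f ∈ supported R R (Set.Iic 0)) : ∃ a, f = C a := by
  rw [mem_supported'] at hf₀ hf₁
  refine ⟨f.coeff 0, LaurentPolynomial.ext fun t ↦ ?_⟩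
  rw [C_apply]
  split_ifs with ht
  · rw [ht]
  · rcases lt_or_gt_of_ne ht with ht | ht
    · exact hf₀ t ht.not_ge
    · exact hf₁ t ht.not_ge

-- `H⁰(ℙ¹, 𝒪(-2j)) = 0`.
lemma eq_zero_of_mul_T_neg_eq_T_mul {j : ℤ} (hj : 0 < j) {f g : R[T;T⁻¹]}
    (hf : f ∈ supported R R (Set.Ici 0)) (hg : g ∈ supported R R (Set.Iic 0))
    (h : g * T (-j) = T j * f) : f = 0 := by
  rw [mem_supported'] at hf hg
  refine LaurentPolynomial.ext fun t ↦ ?_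
  rcases lt_or_ge t 0 with ht | ht
  · exact hf t ht.not_ge
  · have h_coeff : g.coeff (t + j - -j) = f.coeff (t + j - j) := by
      rw [← coeff_mul_T, ← coeff_T_mul, h]
    rw [add_sub_cancel_right] at h_coeff
    rw [← h_coeff]
    exact hg _ (by rw [Set.mem_Iic]; omega)

-- The monomials `z^t` with `m - j < t < j` are independent in `H¹(ℙ¹, 𝒪(m - 2j))`.
lemma eq_zero_of_mul_T_neg_add_eq_T_mul {m j : ℤ} {f g r : R[T;T⁻¹]}
    (hf : f ∈ supported R R (Set.Ici 0)) (hg : g ∈ supported R R (Set.Iic m))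
    (hr : r ∈ supported R R (Set.Ioo (m - j) j)) (h : g * T (-j) + r = T j * f) : r = 0 := by
  rw [mem_supported'] at hf hg hr
  refine LaurentPolynomial.ext fun t ↦ ?_
  by_cases ht : t ∈ Set.Ioo (m - j) j
  · have h_coeff : g.coeff (t - -j) + r.coeff t = f.coeff (t - j) := by
      rw [← coeff_mul_T, ← coeff_T_mul, ← h, coeff_add, Finsupp.add_apply]
    rw [Set.mem_Ioo] at ht
    rwa [hg _ (by rw [Set.mem_Iic]; omega), hf _ (by rw [Set.mem_Ici]; omega), zero_add] at h_coeff
  · exact hr t ht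

end LaurentPolynomial

section Coefficients

variable {n : ℕ}

lemma mem_In_iff_trunc_eq_zero {f : Pz} : f ∈ In n ↔ PowerSeries.trunc (n + 1) f = 0 := by
  simp [In, Ideal.mem_span_singleton, PowerSeries.X_pow_dvd_iff, Polynomial.ext_iff,
    PowerSeries.coeff_trunc]

/-- The coefficient in `ℂ[z,z⁻¹]` of `u^i` in an element of `A = ℂ[z,z⁻¹][u]/(u^{n+1})`, as a
`ℂ`-linear map; it is zero for `i > n`. -/
def uCoeff (i : ℕ) : Aq n →ₗ[ℂ] Lz :=
  ((In n).restrictScalars ℂ).liftQ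
      ((Polynomial.lcoeff Lz i ∘ₗ PowerSeries.trunc (n + 1)).restrictScalars ℂ)
      (fun f hf ↦ by
        have hf : PowerSeries.trunc (n + 1) f = 0 := mem_In_iff_trunc_eq_zero.1 hf
        simp [hf]) ∘ₗ
    (Submodule.Quotient.restrictScalarsEquiv ℂ (In n)).symm

lemma toA_surjective : Function.Surjective (toA n) := Ideal.Quotient.mk_surjective

lemma uCoeff_toA (i : ℕ) (f : Pz) :
    uCoeff i (toA n f) = (PowerSeries.trunc (n + 1) f).coeff i := rfl

lemma eq_of_forall_uCoeff_eq {x y : Aq n} (h : ∀ i ≤ n, uCoeff i x = uCoeff i y) : x = y := by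
  obtain ⟨f, rfl⟩ := toA_surjective x
  obtain ⟨g, rfl⟩ := toA_surjective y
  rw [toA, Ideal.Quotient.eq, mem_In_iff_trunc_eq_zero, map_sub, sub_eq_zero]
  ext1 i
  rcases le_or_gt i n with hi | hi
  · exact h i hi
  · simp [PowerSeries.coeff_trunc, hi.not_ge]

lemma uCoeff_zero_one : uCoeff 0 (1 : Aq n) = 1 := by
  rw [← map_one (toA n), uCoeff_toA, PowerSeries.trunc_one, Polynomial.coeff_one_zero]

lemma uCoeff_zero_mul (x y : Aq n) : uCoeff 0 (x * y) = uCoeff 0 x * uCoeff 0 y := by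
  obtain ⟨f, rfl⟩ := toA_surjective x
  obtain ⟨g, rfl⟩ := toA_surjective y
  simp [← map_mul, uCoeff_toA, PowerSeries.coeff_trunc]

lemma uCoeff_one_mul (x y : Aq n) :
    uCoeff 1 (x * y) = uCoeff 0 x * uCoeff 1 y + uCoeff 1 x * uCoeff 0 y := by
  obtain ⟨f, rfl⟩ := toA_surjective x
  obtain ⟨g, rfl⟩ := toA_surjective y
  simp only [← map_mul, uCoeff_toA, PowerSeries.coeff_trunc, PowerSeries.coeff_one_mul,
    PowerSeries.coeff_zero_eq_constantCoeff_apply, n.succ_pos, if_true]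
  split_ifs
  · ring
  · simp

lemma uCoeff_monA (i : ℕ) (l : ℤ) (m : ℕ) :
    uCoeff i (monA n l m) = if i = m ∧ i ≤ n then T l else 0 := by
  simp only [monA, uCoeff_toA, mon, PowerSeries.coeff_trunc, PowerSeries.coeff_monomial,
    Nat.lt_succ_iff, and_comm (a := i = m), ite_and]

lemma uCoeff_monA_mem_supported {i m : ℕ} {l : ℤ} {s : Set ℤ} (h : i = m → l ∈ s) :
    uCoeff i (monA n l m) ∈ supported ℂ ℂ s := by
  rw [uCoeff_monA]
  split_ifs with him
  · exact T_mem_supported (h him.1)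
  · exact zero_mem _

lemma one_eq_monA : (1 : Aq n) = monA n 0 0 := by
  rw [monA, mon, T_zero, PowerSeries.monomial_zero_eq_C_apply, map_one, map_one]

lemma linearIndepOn_monA :
    LinearIndepOn ℂ (fun x : (_ : ℕ) × ℤ ↦ monA n x.2 x.1) {x | x.1 ≤ n} := by
  refine .of_pairwise_dual_eq_zero_one _
    (fun x ↦ Finsupp.lapply x.1.2 ∘ₗ (coeffLinearEquiv ℂ).toLinearMap ∘ₗ uCoeff x.1.1) ?_ ?_
  · rintro ⟨⟨i, l⟩, hi⟩ ⟨⟨m, t⟩, hm⟩ hne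
    have h_coeff : i = m ∧ i ≤ n → t ≠ l := by
      rintro ⟨rfl, -⟩ rfl
      exact hne rfl
    simp only [LinearMap.comp_apply, uCoeff_monA]
    split_ifs with him
    · simp [h_coeff him]
    · simp
  · rintro ⟨⟨i, l⟩, hi : i ≤ n⟩
    simp [uCoeff_monA, hi]

end Coefficients

section Charts

variable {k n : ℕ} {j : ℤ} {x : Aq n}

lemma uCoeff_mem_supported_of_mem_OU (hx : x ∈ OU n) (i : ℕ) :
    uCoeff i x ∈ supported ℂ ℂ (Set.Ici (0 : ℤ)) := by
  suffices OU n ≤ (supported ℂ ℂ (Set.Ici 0)).comap (uCoeff i) from this hx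
  refine Submodule.span_le.2 ?_
  rintro _ ⟨l, m, hl, -, rfl⟩
  exact uCoeff_monA_mem_supported fun _ ↦ hl

lemma uCoeff_mem_supported_of_mem_OV (hx : x ∈ OV k n) (i : ℕ) :
    uCoeff i x ∈ supported ℂ ℂ (Set.Iic (k * i : ℤ)) := by
  suffices OV k n ≤ (supported ℂ ℂ (Set.Iic (k * i : ℤ))).comap (uCoeff i) from this hx
  refine Submodule.span_le.2 ?_
  rintro _ ⟨l, m, hl, -, rfl⟩
  refine uCoeff_monA_mem_supported ?_
  rintro rfl
  exact hl

lemma uCoeff_mem_supported_of_mem_Rmod (hx : x ∈ Rmod k n j) (i : ℕ) :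
    uCoeff i x ∈ supported ℂ ℂ (Set.Ioo (k * i - j : ℤ) j) := by
  suffices Rmod k n j ≤ (supported ℂ ℂ (Set.Ioo (k * i - j : ℤ) j)).comap (uCoeff i) from this hx
  refine Submodule.span_le.2 ?_
  rintro _ ⟨l, m, -, -, hl, hl', rfl⟩
  refine uCoeff_monA_mem_supported ?_
  rintro rfl
  exact ⟨by omega, by omega⟩

lemma uCoeff_zero_eq_zero_of_mem_Rmod (hx : x ∈ Rmod k n j) : uCoeff 0 x = 0 := by
  suffices Rmod k n j ≤ LinearMap.ker (uCoeff 0) from this hx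
  refine Submodule.span_le.2 ?_
  rintro _ ⟨l, m, hm, -, -, -, rfl⟩
  rw [SetLike.mem_coe, LinearMap.mem_ker, uCoeff_monA, if_neg (by omega)]

lemma one_mem_OU : (1 : Aq n) ∈ OU n :=
  Submodule.subset_span ⟨0, 0, le_rfl, n.zero_le, one_eq_monA⟩

lemma one_mem_OV : (1 : Aq n) ∈ OV k n :=
  Submodule.subset_span ⟨0, 0, by simp, n.zero_le, one_eq_monA⟩

lemma finrank_Rmod (k n : ℕ) (j : ℤ) :
    Module.finrank ℂ (Rmod k n j) = ∑ i ∈ Finset.Icc 1 n, (2 * j - 1 - k * i).toNat := by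
  let s : Finset ((_ : ℕ) × ℤ) :=
    (Finset.Icc 1 n).sigma fun i ↦ Finset.Icc (k * i - j + 1) (j - 1)
  have hs : LinearIndepOn ℂ (fun x : (_ : ℕ) × ℤ ↦ monA n x.2 x.1) s :=
    linearIndepOn_monA.mono fun x hx ↦ by simp_all [s]
  have h_span : Rmod k n j = Submodule.span ℂ (Set.range fun x : s ↦ monA n x.1.2 x.1.1) := by
    rw [Rmod]
    congr 1
    ext x
    simp only [s, Set.mem_ofPred_eq, Set.mem_range, Subtype.exists, Sigma.exists, Finset.mem_sigma,
      Finset.mem_Icc, exists_prop, and_assoc, eq_comm (a := x)]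
    exact exists_comm
  calc Module.finrank ℂ (Rmod k n j)
    _ = Fintype.card s := by rw [h_span]; exact finrank_span_eq_card hs
    _ = ∑ i ∈ Finset.Icc 1 n, (Finset.Icc (k * i - j + 1) (j - 1)).card := by
      rw [Fintype.card_coe, Finset.card_sigma]
    _ = ∑ i ∈ Finset.Icc 1 n, (2 * j - 1 - k * i).toNat :=
      Finset.sum_congr rfl fun i _ ↦ by
        rw [Int.card_Icc]
        congr 1
        ring

end Charts

section BundleIso

variable {k n : ℕ} {j : ℤ} {p q : Aq n}

lemma mul_Mmat_eq_Mmat_mul_iff {A B : Matrix (Fin 2) (Fin 2) (Aq n)} :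
    B * Mmat n j p = Mmat n j q * A ↔
      (B 0 0 * monA n j 0 = monA n j 0 * A 0 0 + q * A 1 0 ∧
        B 0 0 * p + B 0 1 * monA n (-j) 0 = monA n j 0 * A 0 1 + q * A 1 1) ∧
      B 1 0 * monA n j 0 = monA n (-j) 0 * A 1 0 ∧
        B 1 0 * p + B 1 1 * monA n (-j) 0 = monA n (-j) 0 * A 1 1 := by
  simp only [Mmat, ← Matrix.ext_iff, Fin.forall_fin_two, Matrix.mul_apply, Fin.sum_univ_two]
  simp

-- Along `ℓ` the isomorphism is an automorphism of `𝒪(-j) ⊕ 𝒪(j)`, hence triangular with constant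
-- diagonal.
lemma exists_uCoeff_zero_eq_C_of_mul_Mmat_eq (hj : 0 < j)
    (hp : uCoeff 0 p = 0) (hq : uCoeff 0 q = 0)
    {A B : Matrix (Fin 2) (Fin 2) (Aq n)} (hA : ∀ a b, A a b ∈ OU n) (hB : ∀ a b, B a b ∈ OV k n)
    (h : B * Mmat n j p = Mmat n j q * A) :
    (∃ a, uCoeff 0 (A 0 0) = C a ∧ uCoeff 0 (B 0 0) = C a) ∧ (∃ d, uCoeff 0 (A 1 1) = C d) ∧
      uCoeff 0 (A 0 1) = 0 := by
  obtain ⟨⟨h₀₀, h₀₁⟩, -, h₁₁⟩ := mul_Mmat_eq_Mmat_mul_iff.1 h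
  replace h₀₀ := congrArg (uCoeff 0) h₀₀
  replace h₀₁ := congrArg (uCoeff 0) h₀₁
  replace h₁₁ := congrArg (uCoeff 0) h₁₁
  simp only [map_add, uCoeff_zero_mul, uCoeff_monA, hp, hq, zero_le, and_self, if_true, mul_zero,
    zero_mul, add_zero, zero_add] at h₀₀ h₀₁ h₁₁
  have hA₀ (a b) := uCoeff_mem_supported_of_mem_OU (hA a b) 0
  have hB₀ (a b) : uCoeff 0 (B a b) ∈ supported ℂ ℂ (Set.Iic (0 : ℤ)) := by
    simpa using uCoeff_mem_supported_of_mem_OV (hB a b) 0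
  have hBA₀₀ := eq_of_mul_T_eq_T_mul h₀₀
  have hBA₁₁ := eq_of_mul_T_eq_T_mul h₁₁
  obtain ⟨a, ha⟩ := exists_eq_C_of_mem_supported (hA₀ 0 0) (hBA₀₀ ▸ hB₀ 0 0)
  exact ⟨⟨a, ha, hBA₀₀.trans ha⟩,
    exists_eq_C_of_mem_supported (hA₀ 1 1) (hBA₁₁ ▸ hB₀ 1 1),
    eq_zero_of_mul_T_neg_eq_T_mul hj (hA₀ 0 1) (hB₀ 0 1) h₀₁⟩

theorem exists_uCoeff_one_eq_smul_of_bundleIso (hj : 0 < j) (hp : p ∈ Rmod k n j)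
    (hq : q ∈ Rmod k n j) (h : BundleIso k n j p q) :
    ∃ c : ℂ, c ≠ 0 ∧ uCoeff 1 q = c • uCoeff 1 p := by
  obtain ⟨A, B, hA, hB, ⟨w, -, hw⟩, -, hAB⟩ := h
  have hp₀ := uCoeff_zero_eq_zero_of_mem_Rmod hp
  have hq₀ := uCoeff_zero_eq_zero_of_mem_Rmod hq
  obtain ⟨⟨a, hAa, hBa⟩, ⟨d, hAd⟩, hA₀₁⟩ :=
    exists_uCoeff_zero_eq_C_of_mul_Mmat_eq hj hp₀ hq₀ hA hB hAB
  have h_det : C a * C d * uCoeff 0 w = 1 := by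
    simpa [Matrix.det_fin_two, uCoeff_zero_mul, uCoeff_zero_one, hAa, hAd, hA₀₁]
      using congrArg (uCoeff 0) hw
  have ha : a ≠ 0 := by
    rintro rfl
    simp at h_det
  have hd : d ≠ 0 := by
    rintro rfl
    simp at h_det
  have h_u := congrArg (uCoeff 1) (mul_Mmat_eq_Mmat_mul_iff.1 hAB).1.2
  simp only [map_add, uCoeff_one_mul, uCoeff_monA, hp₀, hq₀, hAd, hBa, one_ne_zero, false_and,
    zero_le, and_self, if_true, if_false, mul_zero, zero_mul, add_zero, zero_add,
    mul_comm _ (C d), ← smul_eq_C_mul] at h_u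
  have h_zero : a • uCoeff 1 p - d • uCoeff 1 q = 0 :=
    eq_zero_of_mul_T_neg_add_eq_T_mul (uCoeff_mem_supported_of_mem_OU (hA 0 1) 1)
      (uCoeff_mem_supported_of_mem_OV (hB 0 1) 1)
      (sub_mem (Submodule.smul_mem _ a (uCoeff_mem_supported_of_mem_Rmod hp 1))
        (Submodule.smul_mem _ d (uCoeff_mem_supported_of_mem_Rmod hq 1)))
      (by linear_combination h_u)
  refine ⟨d⁻¹ * a, mul_ne_zero (inv_ne_zero hd) ha, ?_⟩
  rw [mul_smul, sub_eq_zero.1 h_zero, inv_smul_smul₀ hd]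

theorem bundleIso_smul (k : ℕ) (j : ℤ) (p : Aq n) {c : ℂ} (hc : c ≠ 0) :
    BundleIso k n j p (c • p) := by
  let D : Matrix (Fin 2) (Fin 2) (Aq n) := !![c • 1, 0; 0, 1]
  have hD_mem {S : Submodule ℂ (Aq n)} (hS : 1 ∈ S) (a b : Fin 2) : D a b ∈ S := by
    fin_cases a <;> fin_cases b <;> simp [D, hS, S.smul_mem]
  have hD_det {S : Submodule ℂ (Aq n)} (hS : 1 ∈ S) : ∃ w ∈ S, D.det * w = 1 :=
    ⟨c⁻¹ • 1, S.smul_mem _ hS, by simp [D, Matrix.det_fin_two, smul_smul, hc]⟩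
  refine ⟨D, D, hD_mem one_mem_OU, hD_mem one_mem_OV, hD_det one_mem_OU, hD_det one_mem_OV, ?_⟩
  rw [mul_Mmat_eq_Mmat_mul_iff]
  simp [D]

theorem bundleIso_iff_exists_eq_smul (hj : 0 < j) {p q : Aq 1} (hp : p ∈ Rmod k 1 j)
    (hq : q ∈ Rmod k 1 j) : BundleIso k 1 j p q ↔ ∃ c : ℂ, c ≠ 0 ∧ q = c • p := by
  constructor
  · intro h
    obtain ⟨c, hc, hpq⟩ := exists_uCoeff_one_eq_smul_of_bundleIso hj hp hq h
    refine ⟨c, hc, eq_of_forall_uCoeff_eq fun i hi ↦ ?_⟩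
    rw [map_smul]
    interval_cases i
    · rw [uCoeff_zero_eq_zero_of_mem_Rmod hp, uCoeff_zero_eq_zero_of_mem_Rmod hq, smul_zero]
    · exact hpq
  · rintro ⟨c, hc, rfl⟩
    exact bundleIso_smul k j p hc

end BundleIso

section LineThrough

variable {K V : Type*} [DivisionRing K] [AddCommGroup V] [Module K V] {W : Submodule K V}

/-- The point `K·v` of `ℙ(W)` defined by a nonzero vector `v` of a subspace `W`. -/
def lineThrough (v : {x : V // x ∈ W ∧ x ≠ 0}) : Projectivization K W :=
  Projectivization.mk K ⟨v.1, v.2.1⟩ fun h ↦ v.2.2 (congrArg Subtype.val h)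

lemma lineThrough_surjective : Function.Surjective (lineThrough (W := W)) := by
  intro y
  induction y with
  | h w hw => exact ⟨⟨w, w.2, fun h ↦ hw (Subtype.ext h)⟩, rfl⟩

lemma lineThrough_eq_lineThrough_iff {v w : {x : V // x ∈ W ∧ x ≠ 0}} :
    lineThrough v = lineThrough w ↔ ∃ c : K, c ≠ 0 ∧ w.1 = c • v.1 := by
  rw [eq_comm, lineThrough, lineThrough, Projectivization.mk_eq_mk_iff]
  simp only [Subtype.ext_iff, SetLike.val_smul, Units.smul_def, eq_comm (b := w.1)]
  exact Units.exists_iff_ne_zero (p := fun c : K ↦ w.1 = c • v.1)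

end LineThrough

lemma exists_bijective_quot_lift {α β : Type*} {r : α → α → Prop} {f : α → β}
    (hr : ∀ a b, r a b ↔ f a = f b) (hf : Function.Surjective f) :
    ∃ F : Quot r → β, (∀ a, F (Quot.mk r a) = f a) ∧ Function.Bijective F := by
  refine ⟨Quot.lift f fun a b ↦ (hr a b).1, fun _ ↦ rfl, ?_, Quot.surjective_lift _ |>.2 hf⟩
  rintro ⟨a⟩ ⟨b⟩ hab
  exact Quot.sound ((hr a b).2 hab)

lemma relIso_iff_lineThrough_eq {k : ℕ} {j : ℤ} (hj : 0 < j)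
    (p q : {x : Aq 1 // x ∈ Rmod k 1 j ∧ x ≠ 0}) :
    relIso k j p q ↔ lineThrough p = lineThrough q :=
  (bundleIso_iff_exists_eq_smul hj p.2.1 q.2.1).trans lineThrough_eq_lineThrough_iff.symm

/-- for `n = 1` and `k ≤ 2j − 2` (so `dim R = 2j − k − 1`), the relation
`E_p ≅ E_{p′}` is an equivalence relation on `R ∖ {0}` and `p ↦ ℂ·p` induces a well-defined
bijection from its set of equivalence classes onto the projectivization `ℙ(R)`,
a projective space of dimension `2j − k − 2`. -/
theorem statement11 (k : ℕ) (hk : 1 ≤ k) (j : ℤ) (hj : 1 ≤ j)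
    (hkj : (k : ℤ) ≤ 2 * j - 2) :
    (Module.finrank ℂ (Rmod k 1 j) : ℤ) = 2 * j - k - 1 ∧
    Equivalence (relIso k j) ∧
    ∃ F : Quot (relIso k j) → Projectivization ℂ (Rmod k 1 j),
      (∀ p : {x : Aq 1 // x ∈ Rmod k 1 j ∧ x ≠ 0},
        F (Quot.mk (relIso k j) p) =
          Projectivization.mk ℂ (⟨p.1, p.2.1⟩ : Rmod k 1 j)
            (fun h => p.2.2 (congrArg Subtype.val h))) ∧
      Function.Bijective F := by
  have h_rel := relIso_iff_lineThrough_eq (k := k) (j := j) hj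
  refine ⟨?_, ?_, exists_bijective_quot_lift h_rel lineThrough_surjective⟩
  · rw [finrank_Rmod, Finset.Icc_self, Finset.sum_singleton]
    omega
  · have h_eq : relIso k j = Function.onFun Eq lineThrough := by
      ext p q
      exact h_rel p q
    exact h_eq ▸ eq_equivalence.comap lineThrough
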